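/- arXiv:1603.06245 — 12 statements merged into one kernel-verified Lean document; each statement's English description precedes it below -/
import Mathlib

section
/- Let c0, c1 ≥ 0 and a be real constants and v0 ≥ 0 with c0² + 4·a·c1 ≥ 0 and w := √(c0² + 4·a·c1) > 0. Define v(t) := v0 + (a0 − a)·E(t,w)/(1 − γ·E(t,w)). Then v(0) = v0, and at every t where 1 − γ·E(t,w) ≠ 0 the function v is differentiable and satisfies the Riccati equation v'(t) = a − c0·v(t) − c1·v(t)². -/
/-- The formula v(t) = v0 + (a0 − a)·E(t,w)/(1 − γ·E(t,w)) satisfies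
v(0) = v0 and the Riccati ODE v' = a − c0·v − c1·v² wherever the denominator is nonzero. -/
theorem stmt0 (c0 c1 a v0 : ℝ) (hc0 : 0 ≤ c0) (hc1 : 0 ≤ c1) (hv0 : 0 ≤ v0)
    (hdisc : 0 ≤ c0 ^ 2 + 4 * a * c1)
    (w : ℝ) (hw : w = Real.sqrt (c0 ^ 2 + 4 * a * c1)) (hwpos : 0 < w)
    (α γ a0 : ℝ) (hα : α = (w + c0) / 2) (hγ : γ = c1 * v0 + α)
    (ha0 : a0 = (c1 * v0 + c0) * v0)
    (E : ℝ → ℝ → ℝ) (hE : ∀ t u, E t u = (1 - Real.exp (u * t)) / u)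
    (v : ℝ → ℝ) (hv : ∀ t, v t = v0 + (a0 - a) * E t w / (1 - γ * E t w)) :
    v 0 = v0 ∧
      ∀ t : ℝ, 1 - γ * E t w ≠ 0 →
        HasDerivAt v (a - c0 * v t - c1 * v t ^ 2) t := by
  have hw2 : w ^ 2 = c0 ^ 2 + 4 * a * c1 := by
    rw [hw]; exact Real.sq_sqrt hdisc
  have hw0 : w ≠ 0 := hwpos.ne'
  refine ⟨by simp [hv, hE], ?_⟩
  intro t hD
  have hE1 : HasDerivAt (fun s => E s w) (w * E t w - 1) t := by
    have h1 : HasDerivAt (fun s : ℝ => w * s) w t := by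
      simpa using (hasDerivAt_id t).const_mul w
    have h2 := (h1.exp.const_sub 1).div_const w
    have h3 : (fun s => E s w) = fun s => (1 - Real.exp (w * s)) / w := by
      funext s; exact hE s w
    rw [h3, hE]
    refine h2.congr_deriv ?_
    field_simp
    ring
  have hfun : v = fun s => v0 + (a0 - a) * E s w / (1 - γ * E s w) := funext hv
  have h4 := ((hE1.const_mul (a0 - a)).fun_div ((hE1.const_mul γ).const_sub 1) hD).const_add v0
  rw [← hfun] at h4
  refine h4.congr_deriv (Eq.symm ?_)
  rw [hv t]
  generalize E t w = e at hD
  have key : -(1 - γ * e) ^ 2 - (c0 + 2 * c1 * v0) * e * (1 - γ * e) - c1 * (a0 - a) * e ^ 2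
      = w * e - 1 := by
    subst hγ hα ha0
    linear_combination (-e ^ 2 / 4) * hw2
  generalize hd : 1 - γ * e = d at *
  field_simp
  rw [ha0] at *
  subst hd
  linear_combination ((c1 * v0 + c0) * v0 - a) * key
end

section
/- Let c0 ≥ 0, c1 > 0, a < 0 and v0 ≥ 0 with c0² + 4·a·c1 < 0 and v0·c0 + 2·|a| > 0 and 2·c1·v0 + c0 > 0. Define v(t) := √(|a|/c1) · sin(θ0 − t·|w|/2)/sin(θ1 + t·|w|/2). Then v(0) = v0, and at every t where sin(θ1 + t·|w|/2) ≠ 0 the function v is differentiable and satisfies the Riccati equation v'(t) = a − c0·v(t) − c1·v(t)². -/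
theorem sc_aux (x y R : ℝ) (hx : 0 < x) (hR : 0 < R) (h : R ^ 2 = x ^ 2 + y ^ 2) :
    Real.sin (Real.arctan (y / x)) = y / R ∧ Real.cos (Real.arctan (y / x)) = x / R := by
  have e : Real.sqrt (1 + (y / x) ^ 2) = R / x := by
    rw [show 1 + (y / x) ^ 2 = (R / x) ^ 2 by field_simp; linarith]
    exact Real.sqrt_sq (by positivity)
  rw [Real.sin_arctan, Real.cos_arctan, e]
  constructor <;> field_simp

/-- In the complex-w case, v(t) = √(|a|/c1)·sin(θ0 − t|w|/2)/sin(θ1 + t|w|/2)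
satisfies v(0) = v0 and the Riccati ODE wherever the denominator is nonzero. -/
theorem stmt1 (c0 c1 a v0 : ℝ) (hc0 : 0 ≤ c0) (hc1 : 0 < c1) (ha : a < 0) (hv0 : 0 ≤ v0)
    (hdisc : c0 ^ 2 + 4 * a * c1 < 0)
    (h1 : 0 < v0 * c0 + 2 * |a|) (h2 : 0 < 2 * c1 * v0 + c0)
    (wabs θ0 θ1 : ℝ)
    (hwabs : wabs = Real.sqrt (-(c0 ^ 2 + 4 * a * c1)))
    (hθ0 : θ0 = Real.arctan (v0 * wabs / (v0 * c0 + 2 * |a|)))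
    (hθ1 : θ1 = Real.arctan (wabs / (2 * c1 * v0 + c0)))
    (v : ℝ → ℝ)
    (hv : ∀ t, v t = Real.sqrt (|a| / c1) * Real.sin (θ0 - t * wabs / 2) /
        Real.sin (θ1 + t * wabs / 2)) :
    v 0 = v0 ∧
      ∀ t : ℝ, Real.sin (θ1 + t * wabs / 2) ≠ 0 →
        HasDerivAt v (a - c0 * v t - c1 * v t ^ 2) t := by
  have hk0 : 0 < Real.sqrt (|a| / c1) := Real.sqrt_pos.2 (div_pos (abs_pos.2 ha.ne) hc1)
  have hk2 : Real.sqrt (|a| / c1) ^ 2 = |a| / c1 := Real.sq_sqrt (by positivity)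
  set k := Real.sqrt (|a| / c1) with hk
  rw [abs_of_neg ha] at hk2 h1 hθ0
  have hka : a = -(k ^ 2 * c1) := by rw [hk2]; field_simp
  have hw0 : 0 < wabs := by rw [hwabs]; exact Real.sqrt_pos.2 (by linarith)
  have hw2 : wabs ^ 2 = 4 * k ^ 2 * c1 ^ 2 - c0 ^ 2 := by
    rw [hwabs, Real.sq_sqrt (by linarith), hka]; ring
  clear_value k
  clear hk hk2 hwabs
  subst hka
  have hQ : 0 < 4 * c1 * (c1 * v0 ^ 2 + c0 * v0 + k ^ 2 * c1) := by positivity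
  obtain ⟨r, hr, hr2⟩ : ∃ r : ℝ, 0 < r ∧ r ^ 2 = 4 * c1 * (c1 * v0 ^ 2 + c0 * v0 + k ^ 2 * c1) :=
    ⟨_, Real.sqrt_pos.2 hQ, Real.sq_sqrt hQ.le⟩
  obtain ⟨s0, d0⟩ := sc_aux (v0 * c0 + 2 * -(-(k ^ 2 * c1))) (v0 * wabs) (k * r) h1 (by positivity)
    (by rw [mul_pow, mul_pow v0, hr2, hw2]; ring)
  obtain ⟨s1, d1⟩ := sc_aux (2 * c1 * v0 + c0) wabs r h2 hr (by rw [hr2, hw2]; ring)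
  rw [← hθ0] at s0 d0
  rw [← hθ1] at s1 d1
  have hS : Real.sin (θ0 + θ1) * (2 * k * c1) = wabs := by
    rw [Real.sin_add, s0, d0, s1, d1]
    field_simp
    rw [hr2]; ring
  have hC : Real.cos (θ0 + θ1) * (2 * k * c1) = c0 := by
    rw [Real.cos_add, s0, d0, s1, d1]
    field_simp
    rw [hr2, hw2]; ring
  refine ⟨?_, ?_⟩
  · rw [hv]
    simp only [zero_mul, zero_div, sub_zero, add_zero]
    rw [s0, s1]
    field_simp
  intro t ht
  have hA : HasDerivAt (fun t : ℝ => θ0 - t * wabs / 2) (-(wabs / 2)) t := by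
    have := (((hasDerivAt_id t).mul_const wabs).div_const 2).const_sub θ0
    simpa using this
  have hB : HasDerivAt (fun t : ℝ => θ1 + t * wabs / 2) (wabs / 2) t := by
    have := (((hasDerivAt_id t).mul_const wabs).div_const 2).const_add θ1
    simpa using this
  have hD := (hA.sin.const_mul k).div hB.sin ht
  have hv' : v = fun t => k * Real.sin (θ0 - t * wabs / 2) / Real.sin (θ1 + t * wabs / 2) :=
    funext hv
  have hsum : θ0 + θ1 = (θ0 - t * wabs / 2) + (θ1 + t * wabs / 2) := by ring
  rw [hsum] at hS hC
  rw [hv t, hv']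
  refine hD.congr_deriv ?_
  generalize θ0 - t * wabs / 2 = A at *
  generalize θ1 + t * wabs / 2 = B at *
  rw [← hC, ← hS, Real.sin_add, Real.cos_add]
  have pA := Real.sin_sq_add_cos_sq A
  have pB := Real.sin_sq_add_cos_sq B
  generalize Real.sin A = x at *
  generalize Real.cos A = y at *
  generalize Real.sin B = z at *
  generalize Real.cos B = u at *
  have key : (x * u + y * z) ^ 2 = x ^ 2 + z ^ 2 + 2 * (y * u - x * z) * x * z := by
    linear_combination x ^ 2 * pB + z ^ 2 * pA
  field_simp
  linear_combination (-1) * key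
end

section
/- Let c0 ≥ 0, c1 > 0, a ∈ ℝ, v0 ≥ 0 with w := √(c0² + 4·a·c1) > 0, and set v∞ := β/c1. Define s(t) := v∞·t + (1/c1)·log(1 − c1·(v∞ − v0)·E(−t,w)). Then s(0) = 0, and at every t where 1 − c1·(v∞ − v0)·E(−t,w) > 0 and 1 − γ·E(t,w) ≠ 0, s is differentiable with s'(t) = v(t), where v(t) := v0 + (a0 − a)·E(t,w)/(1 − γ·E(t,w)). -/
/-- the travelled space s(t) = v∞·t + (1/c1)·log(1 − c1(v∞ − v0)E(−t,w))
satisfies s(0) = 0 and s'(t) = v(t) wherever the log argument is positive and the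
denominator of v is nonzero. -/
theorem stmt5 (c0 c1 a v0 : ℝ) (hc0 : 0 ≤ c0) (hc1 : 0 < c1) (hv0 : 0 ≤ v0)
    (w α β γ a0 vinf : ℝ) (hw : w = Real.sqrt (c0 ^ 2 + 4 * a * c1)) (hwpos : 0 < w)
    (hα : α = (w + c0) / 2) (hβ : β = (w - c0) / 2) (hγ : γ = c1 * v0 + α)
    (ha0 : a0 = (c1 * v0 + c0) * v0) (hvinf : vinf = β / c1)
    (E : ℝ → ℝ → ℝ) (hE : ∀ t u, E t u = (1 - Real.exp (u * t)) / u)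
    (s v : ℝ → ℝ)
    (hs : ∀ t, s t = vinf * t + (1 / c1) * Real.log (1 - c1 * (vinf - v0) * E (-t) w))
    (hv : ∀ t, v t = v0 + (a0 - a) * E t w / (1 - γ * E t w)) :
    s 0 = 0 ∧
      ∀ t : ℝ, 0 < 1 - c1 * (vinf - v0) * E (-t) w → 1 - γ * E t w ≠ 0 →
        HasDerivAt s (v t) t := by
  have hpos : 0 < c0 ^ 2 + 4 * a * c1 := by
    rw [hw] at hwpos
    exact Real.sqrt_pos.mp hwpos
  have hw2 : w ^ 2 = c0 ^ 2 + 4 * a * c1 := by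
    rw [hw]
    exact Real.sq_sqrt hpos.le
  have hw0 : w ≠ 0 := hwpos.ne'
  have hc0' : c1 ≠ 0 := hc1.ne'
  obtain ⟨k, hk⟩ : ∃ k, k = β - c1 * v0 := ⟨_, rfl⟩
  have hkv : c1 * (vinf - v0) = k := by
    rw [hvinf, hk]
    field_simp
  have hγk : γ = w - k := by
    rw [hγ, hk, hα, hβ]
    ring
  have hprod : c1 * (a0 - a) = -(k * γ) := by
    rw [hγ, hk, hα, hβ, ha0]
    linear_combination (1 / 4) * hw2
  have hcv : c1 * vinf = k + c1 * v0 := by linear_combination hkv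
  refine ⟨by simp [hs, hE], ?_⟩
  intro t hL hD
  rw [hkv, hE] at hL
  rw [hE] at hD
  have hsf : s = fun t => vinf * t + (1 / c1) * Real.log (1 - k * ((1 - Real.exp (w * (-t))) / w)) := by
    funext t
    rw [hs, hkv, hE]
  have h1 : HasDerivAt (fun t : ℝ => Real.exp (w * (-t))) (Real.exp (w * (-t)) * (w * (-1))) t :=
    (((hasDerivAt_id t).neg).const_mul w).exp
  have h2 := ((((h1.const_sub 1).div_const w).const_mul k).const_sub 1).log hL.ne'
  have h3 := ((hasDerivAt_id t).const_mul vinf).add (h2.const_mul (1 / c1))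
  rw [hsf]
  refine HasDerivAt.congr_deriv h3 ?_
  rw [hv, hE]
  have hx : Real.exp (w * t) ≠ 0 := (Real.exp_pos _).ne'
  have hinv : Real.exp (w * (-t)) = (Real.exp (w * t))⁻¹ := by
    rw [← Real.exp_neg]
    ring_nf
  rw [hinv] at hL ⊢
  generalize Real.exp (w * t) = x at *
  obtain ⟨e, he⟩ : ∃ e, e = (1 - x) / w := ⟨_, rfl⟩
  have hex : x = 1 - w * e := by
    rw [he]
    field_simp
    ring
  rw [← he] at hD ⊢
  have hLD : 1 - k * ((1 - x⁻¹) / w) = (1 - γ * e) / x := by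
    rw [he, hγk]
    field_simp
    ring
  rw [hLD]
  have hnum : -(k * (-(x⁻¹ * (w * -1)) / w)) / ((1 - γ * e) / x) = -k / (1 - γ * e) := by
    field_simp
  rw [hnum]
  apply mul_left_cancel₀ hc0'
  have e1 : c1 * (vinf * 1 + 1 / c1 * (-k / (1 - γ * e))) = c1 * vinf - k / (1 - γ * e) := by
    field_simp
    ring
  have e2 : c1 * (v0 + (a0 - a) * e / (1 - γ * e)) = c1 * v0 + (c1 * (a0 - a)) * e / (1 - γ * e) := by
    ring
  rw [e1, e2, hprod, hcv]
  field_simp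
  ring
end

section
/- Let c0 ≥ 0, c1 > 0, a < 0, v0 ≥ 0 with c0² + 4·a·c1 < 0, v0·c0 + 2·|a| > 0 and 2·c1·v0 + c0 > 0. Define s(t) := (1/c1)·( log( sin(θ1 + t·|w|/2)/sin θ1 ) − (c0/2)·t ). Then s(0) = 0, and at every t where sin(θ1 + t·|w|/2) > 0, s is differentiable with s'(t) = v(t), where v(t) := √(|a|/c1) · sin(θ0 − t·|w|/2)/sin(θ1 + t·|w|/2). -/
theorem aux_sc (p y r : ℝ) (hp : 0 < p) (hr : 0 < r) (h : p ^ 2 + y ^ 2 = r ^ 2) :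
    Real.sin (Real.arctan (y / p)) = y / r ∧ Real.cos (Real.arctan (y / p)) = p / r := by
  have e : Real.sqrt (1 + (y / p) ^ 2) = r / p := by
    have : 1 + (y / p) ^ 2 = (r / p) ^ 2 := by
      field_simp
      linarith
    rw [this, Real.sqrt_sq (by positivity)]
  rw [Real.sin_arctan, Real.cos_arctan, e]
  constructor <;> field_simp

/-- in the complex-w case, the travelled space
s(t) = (1/c1)(log(sin(θ1 + t|w|/2)/sin θ1) − (c0/2)t) satisfies s(0) = 0 and s' = v. -/
theorem stmt6 (c0 c1 a v0 : ℝ) (hc0 : 0 ≤ c0) (hc1 : 0 < c1) (ha : a < 0) (hv0 : 0 ≤ v0)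
    (hdisc : c0 ^ 2 + 4 * a * c1 < 0)
    (h1 : 0 < v0 * c0 + 2 * |a|) (h2 : 0 < 2 * c1 * v0 + c0)
    (wabs θ0 θ1 : ℝ)
    (hwabs : wabs = Real.sqrt (-(c0 ^ 2 + 4 * a * c1)))
    (hθ0 : θ0 = Real.arctan (v0 * wabs / (v0 * c0 + 2 * |a|)))
    (hθ1 : θ1 = Real.arctan (wabs / (2 * c1 * v0 + c0)))
    (s v : ℝ → ℝ)
    (hs : ∀ t, s t = (1 / c1) *
        (Real.log (Real.sin (θ1 + t * wabs / 2) / Real.sin θ1) - (c0 / 2) * t))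
    (hv : ∀ t, v t = Real.sqrt (|a| / c1) * Real.sin (θ0 - t * wabs / 2) /
        Real.sin (θ1 + t * wabs / 2)) :
    s 0 = 0 ∧
      ∀ t : ℝ, 0 < Real.sin (θ1 + t * wabs / 2) → HasDerivAt s (v t) t := by
  have hw : 0 < wabs := by rw [hwabs]; exact Real.sqrt_pos.mpr (by linarith)
  have hw2 : wabs ^ 2 = -(c0 ^ 2 + 4 * a * c1) := by
    rw [hwabs]; exact Real.sq_sqrt (by linarith)
  clear hwabs
  rw [abs_of_neg ha] at h1 hθ0
  rw [abs_of_neg ha] at hv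
  obtain ⟨b, hb, rfl⟩ : ∃ b, 0 < b ∧ a = -b ^ 2 :=
    ⟨Real.sqrt (-a), Real.sqrt_pos.mpr (by linarith), by rw [Real.sq_sqrt (by linarith)]; ring⟩
  obtain ⟨k, hk, rfl⟩ : ∃ k, 0 < k ∧ c1 = k ^ 2 :=
    ⟨Real.sqrt c1, Real.sqrt_pos.mpr hc1, by rw [Real.sq_sqrt hc1.le]⟩
  obtain ⟨d, hd, hd2⟩ : ∃ d, 0 < d ∧ d ^ 2 = k ^ 2 * v0 ^ 2 + c0 * v0 + b ^ 2 :=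
    ⟨Real.sqrt (k ^ 2 * v0 ^ 2 + c0 * v0 + b ^ 2), Real.sqrt_pos.mpr (by positivity),
      Real.sq_sqrt (by positivity)⟩
  have hq : Real.sqrt (- -b ^ 2 / k ^ 2) = b / k := by
    rw [neg_neg, ← div_pow, Real.sqrt_sq (by positivity)]
  obtain ⟨s1, k1⟩ := aux_sc (2 * k ^ 2 * v0 + c0) wabs (2 * k * d) h2 (by positivity)
    (by rw [mul_pow, hd2, hw2]; ring)
  obtain ⟨s0, k0⟩ := aux_sc (v0 * c0 + 2 * - -b ^ 2) (v0 * wabs) (2 * b * d) h1 (by positivity)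
    (by rw [mul_pow _ d, hd2, mul_pow v0, hw2]; ring)
  rw [← hθ1] at s1 k1
  rw [← hθ0] at s0 k0
  have hs1 : Real.sin θ1 ≠ 0 := by rw [s1]; positivity
  refine ⟨by rw [hs]; simp [div_self hs1], fun t ht => ?_⟩
  have hs' : s = fun t => (1 / k ^ 2) *
        (Real.log (Real.sin (θ1 + t * wabs / 2) / Real.sin θ1) - (c0 / 2) * t) := funext hs
  have d1 : HasDerivAt (fun t : ℝ => θ1 + t * wabs / 2) (1 * wabs / 2) t :=
    (((hasDerivAt_id t).mul_const wabs).div_const 2).const_add θ1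
  have d2 := (((d1.sin.div_const (Real.sin θ1)).log (div_ne_zero ht.ne' hs1)).sub
    ((hasDerivAt_id t).const_mul (c0 / 2))).const_mul (1 / k ^ 2)
  rw [hs']
  refine d2.congr_deriv ?_
  rw [hv, hq]
  have key : wabs / 2 * Real.cos (θ1 + t * wabs / 2) - c0 / 2 * Real.sin (θ1 + t * wabs / 2)
      = k * b * Real.sin (θ0 - t * wabs / 2) := by
    rw [Real.cos_add, Real.sin_add, Real.sin_sub, s0, s1, k0, k1]
    generalize Real.cos (t * wabs / 2) = C
    generalize Real.sin (t * wabs / 2) = S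
    field_simp
    linear_combination (-S) * hw2
  have : Real.sin (θ0 - t * wabs / 2) = (wabs / 2 * Real.cos (θ1 + t * wabs / 2)
      - c0 / 2 * Real.sin (θ1 + t * wabs / 2)) / (k * b) := by
    rw [key]; field_simp
  rw [this]
  have := ht.ne'
  generalize Real.sin (θ1 + t * wabs / 2) = S at *
  generalize Real.cos (θ1 + t * wabs / 2) = C at *
  field_simp
end

section
/- Let c0 ≥ 0, c1 > 0, a ∈ ℝ, v0 ≥ 0 with w := √(c0² + 4·a·c1) > 0 and β := (w − c0)/2 ≠ 0, a + v0·β ≠ 0, 1 − w·v0/(a + v0·β) > 0, 1 − v0·c1/β > 0 and 1 + v0·c1/α > 0. Set t0 := (1/w)·log(1 − w·v0/(a + v0·β)) and s(t) := (β/c1)·t + (1/c1)·log(1 − c1·(β/c1 − v0)·E(−t,w)). Then s(t0) = (1/w)·[ (β/c1)·log(1 − v0·c1/β) + (α/c1)·log(1 + v0·c1/α) ]. -/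
/-- the value of the travelled space at the time t0 where the speed vanishes. -/
theorem stmt7 (c0 c1 a v0 : ℝ) (hc0 : 0 ≤ c0) (hc1 : 0 < c1) (hv0 : 0 ≤ v0)
    (w α β : ℝ) (hw : w = Real.sqrt (c0 ^ 2 + 4 * a * c1)) (hwpos : 0 < w)
    (hα : α = (w + c0) / 2) (hβ : β = (w - c0) / 2) (hβ0 : β ≠ 0)
    (h1 : a + v0 * β ≠ 0) (h2 : 0 < 1 - w * v0 / (a + v0 * β))
    (h3 : 0 < 1 - v0 * c1 / β) (h4 : 0 < 1 + v0 * c1 / α)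
    (E : ℝ → ℝ → ℝ) (hE : ∀ t u, E t u = (1 - Real.exp (u * t)) / u)
    (t0 : ℝ) (ht0 : t0 = (1 / w) * Real.log (1 - w * v0 / (a + v0 * β)))
    (s : ℝ → ℝ)
    (hs : ∀ t, s t = (β / c1) * t +
        (1 / c1) * Real.log (1 - c1 * (β / c1 - v0) * E (-t) w)) :
    s t0 = (1 / w) * ((β / c1) * Real.log (1 - v0 * c1 / β) +
        (α / c1) * Real.log (1 + v0 * c1 / α)) := by
  have harg : 0 < c0 ^ 2 + 4 * a * c1 := Real.sqrt_pos.mp (hw ▸ hwpos)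
  have hw2 : w ^ 2 = c0 ^ 2 + 4 * a * c1 := by rw [hw, Real.sq_sqrt harg.le]
  have hα0 : 0 < α := by rw [hα]; linarith
  have hab : α * β = a * c1 := by rw [hα, hβ]; linarith
  have hsum : w = α + β := by rw [hα, hβ]; ring
  have ha : a = α * β / c1 := by field_simp; linarith
  have hd : 0 < α + v0 * c1 := by positivity
  have hw0 : w ≠ 0 := hwpos.ne'
  have hav : a + v0 * β = β * (α + v0 * c1) / c1 := by rw [ha]; field_simp
  have hQ' : 1 + v0 * c1 / α = (α + v0 * c1) / α := by field_simp
  have key : 1 - w * v0 / (a + v0 * β) = (1 - v0 * c1 / β) / (1 + v0 * c1 / α) := by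
    rw [hav, hQ', hsum]
    have := hd.ne'
    field_simp
    ring
  have hexp : Real.exp (w * -t0) = (1 + v0 * c1 / α) / (1 - v0 * c1 / β) := by
    have : w * -t0 = - Real.log (1 - w * v0 / (a + v0 * β)) := by
      rw [ht0]; field_simp
    rw [this, Real.exp_neg, Real.exp_log h2, key, inv_div]
  have harg2 : 1 - c1 * (β / c1 - v0) * E (-t0) w = 1 + v0 * c1 / α := by
    rw [hE, hexp]
    have hP : c1 * (β / c1 - v0) = β * (1 - v0 * c1 / β) := by field_simp
    have hPQ : (1 - v0 * c1 / β) - (1 + v0 * c1 / α) = - (v0 * c1 * w / (α * β)) := by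
      rw [hsum]; field_simp; ring
    have h3' := h3.ne'
    rw [hP]
    generalize hp : 1 - v0 * c1 / β = P at *
    generalize hq : 1 + v0 * c1 / α = Q at *
    have e : β * P * ((1 - Q / P) / w) = β * (P - Q) / w := by field_simp
    rw [e, hPQ, ← hq]
    field_simp
    ring
  rw [hs, harg2, ht0, key, Real.log_div h3.ne' h4.ne']
  have : α = w - β := by linarith
  generalize Real.log (1 - v0 * c1 / β) = P
  generalize Real.log (1 + v0 * c1 / α) = Q
  rw [this]
  field_simp
  ring
end

section
/- Let c0 ≥ 0, c1 > 0, a < 0, v0 ≥ 0 with c0² + 4·a·c1 < 0, v0·c0 + 2·|a| > 0 and 2·c1·v0 + c0 > 0. Set t_v0 := 2·θ0/|w| and s(t) := (1/c1)·( log( sin(θ1 + t·|w|/2)/sin θ1 ) − (c0/2)·t ). Then s(t_v0) = (1/(2·c1))·[ log(1 + a0/|a|) − c0·t_v0 ], where a0 := (c1·v0 + c0)·v0. -/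
/-- in the complex-w case, the value of the travelled space at
t_v0 = 2θ0/|w| equals (1/(2c1))(log(1 + a0/|a|) − c0·t_v0). -/
theorem stmt8 (c0 c1 a v0 : ℝ) (hc0 : 0 ≤ c0) (hc1 : 0 < c1) (ha : a < 0) (hv0 : 0 ≤ v0)
    (hdisc : c0 ^ 2 + 4 * a * c1 < 0)
    (h1 : 0 < v0 * c0 + 2 * |a|) (h2 : 0 < 2 * c1 * v0 + c0)
    (wabs θ0 θ1 a0 : ℝ)
    (hwabs : wabs = Real.sqrt (-(c0 ^ 2 + 4 * a * c1)))
    (hθ0 : θ0 = Real.arctan (v0 * wabs / (v0 * c0 + 2 * |a|)))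
    (hθ1 : θ1 = Real.arctan (wabs / (2 * c1 * v0 + c0)))
    (ha0 : a0 = (c1 * v0 + c0) * v0)
    (tv0 : ℝ) (htv0 : tv0 = 2 * θ0 / wabs)
    (s : ℝ → ℝ)
    (hs : ∀ t, s t = (1 / c1) *
        (Real.log (Real.sin (θ1 + t * wabs / 2) / Real.sin θ1) - (c0 / 2) * t)) :
    s tv0 = (1 / (2 * c1)) * (Real.log (1 + a0 / |a|) - c0 * tv0) := by
  obtain ⟨b, hb, rfl⟩ : ∃ b : ℝ, 0 < b ∧ a = -b := ⟨-a, by linarith, by ring⟩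
  have habs : |(-b)| = b := by rw [abs_neg, abs_of_pos hb]
  rw [habs] at h1 hθ0 ⊢
  have hw : 0 < wabs := by rw [hwabs]; exact Real.sqrt_pos.mpr (by linarith)
  have hw2 : wabs ^ 2 = 4 * b * c1 - c0 ^ 2 := by
    rw [hwabs, Real.sq_sqrt (by linarith)]; ring
  have hba : 0 < b + a0 := by rw [ha0]; positivity
  have hc1' : Real.cos θ1 ≠ 0 := by rw [hθ1]; exact (Real.cos_arctan_pos _).ne'
  have hc0' : Real.cos θ0 ≠ 0 := by rw [hθ0]; exact (Real.cos_arctan_pos _).ne'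
  have hs1 : Real.sin θ1 = wabs / (2 * c1 * v0 + c0) * Real.cos θ1 := by
    rw [← Real.tan_mul_cos hc1']; congr 1; rw [hθ1, Real.tan_arctan]
  have hs0 : Real.sin θ0 = v0 * wabs / (v0 * c0 + 2 * b) * Real.cos θ0 := by
    rw [← Real.tan_mul_cos hc0']; congr 1; rw [hθ0, Real.tan_arctan]
  have hD : (v0 * c0 + 2 * b) ^ 2 + (v0 * wabs) ^ 2 = 4 * b * (b + a0) := by
    rw [mul_pow, hw2, ha0]; ring
  have hcos : Real.cos θ0 ^ 2 = (v0 * c0 + 2 * b) ^ 2 / (4 * b * (b + a0)) := by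
    rw [← hD, hθ0, Real.cos_sq_arctan]
    field_simp
  have harg : θ1 + tv0 * wabs / 2 = θ1 + θ0 := by
    rw [htv0]; field_simp
  have hR : Real.sin (θ1 + θ0) / Real.sin θ1
      = Real.cos θ0 * (2 * (b + a0) / (v0 * c0 + 2 * b)) := by
    rw [Real.sin_add, hs0, hs1, ha0]
    field_simp
    ring
  have hR2 : 1 + a0 / b = (Real.sin (θ1 + θ0) / Real.sin θ1) ^ 2 := by
    rw [hR, mul_pow, hcos]
    field_simp
    ring
  rw [hs, harg, hR2, Real.log_pow]
  push_cast
  field_simp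
end

section
/- For all real t, w, c0 with w ≠ 0, the series Σ_{n=1}^∞ (t^{2n}/(2^{2n}·(2n)!))·[2 + c0·t/(2n+1)]·(c0^{2n} − w^{2n}) converges to 2·exp(t·c0/2) − exp(−t·w/2) − exp(t·w/2) + (c0/w)·(exp(−t·w/2) − exp(t·w/2)); equivalently, when w² ≠ c0², the function F(t,w,c0) := exp(t·c0/2)·(1/w)·[E(−t,(w+c0)/2) + E(t,(w−c0)/2)] satisfies F(t,w,c0) = −Σ_{n=1}^∞ (f_n·t^{2n}/(2^{2n}·(2n)!))·[4 + 2·c0·t/(2n+1)] with f_n := (w^{2n} − c0^{2n})/(w² − c0²). -/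
theorem hasSum_transfer {f g : ℕ → ℝ} {a b : ℝ} (h : HasSum f a)
    (hf : ∀ n, g n = f n) (hb : b = a) : HasSum g b := by
  have : g = f := funext hf
  rw [this, hb]; exact h

/-- the power-series expansion of the auxiliary function F(t,w,c0). -/
theorem stmt11 (t w c0 : ℝ) (hw : w ≠ 0) :
    HasSum (fun n : ℕ =>
        t ^ (2 * (n + 1)) / (2 ^ (2 * (n + 1)) * (Nat.factorial (2 * (n + 1)) : ℝ)) *
          (2 + c0 * t / (2 * (n : ℝ) + 3)) *
          (c0 ^ (2 * (n + 1)) - w ^ (2 * (n + 1))))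
      (2 * Real.exp (t * c0 / 2) - Real.exp (-t * w / 2) - Real.exp (t * w / 2) +
        (c0 / w) * (Real.exp (-t * w / 2) - Real.exp (t * w / 2))) ∧
    (w ^ 2 ≠ c0 ^ 2 →
      HasSum (fun n : ℕ =>
          ((w ^ (2 * (n + 1)) - c0 ^ (2 * (n + 1))) / (w ^ 2 - c0 ^ 2)) *
            t ^ (2 * (n + 1)) /
            (2 ^ (2 * (n + 1)) * (Nat.factorial (2 * (n + 1)) : ℝ)) *
            (4 + 2 * c0 * t / (2 * (n : ℝ) + 3)))
        (-(Real.exp (t * c0 / 2) * (1 / w) *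
            ((1 - Real.exp ((w + c0) / 2 * (-t))) / ((w + c0) / 2) +
             (1 - Real.exp ((w - c0) / 2 * t)) / ((w - c0) / 2))))) := by
  have h1 : HasSum (fun n : ℕ =>
        t ^ (2 * (n + 1)) / (2 ^ (2 * (n + 1)) * (Nat.factorial (2 * (n + 1)) : ℝ)) *
          (2 + c0 * t / (2 * (n : ℝ) + 3)) *
          (c0 ^ (2 * (n + 1)) - w ^ (2 * (n + 1))))
      (2 * Real.exp (t * c0 / 2) - Real.exp (-t * w / 2) - Real.exp (t * w / 2) +
        (c0 / w) * (Real.exp (-t * w / 2) - Real.exp (t * w / 2))) := by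
    have A := (((Real.hasSum_cosh (t * c0 / 2)).sub (Real.hasSum_cosh (t * w / 2))).add
      ((Real.hasSum_sinh (t * c0 / 2)).sub
        ((Real.hasSum_sinh (t * w / 2)).mul_left (c0 / w)))).mul_left 2
    rw [← hasSum_nat_add_iff' 1] at A
    refine hasSum_transfer A ?_ ?_
    · intro n
      have hf : ((Nat.factorial (2 * (n + 1) + 1) : ℕ) : ℝ)
          = (2 * (n : ℝ) + 3) * (Nat.factorial (2 * (n + 1)) : ℝ) := by
        rw [Nat.factorial_succ]; push_cast; ring
      rw [hf]
      have h3 : (2 * (n : ℝ) + 3) ≠ 0 := by positivity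
      have h4 : (Nat.factorial (2 * (n + 1)) : ℝ) ≠ 0 := by positivity
      generalize (Nat.factorial (2 * (n + 1)) : ℝ) = F at *
      generalize (2 * (n : ℝ) + 3) = G at *
      generalize 2 * (n + 1) = m
      simp only [pow_succ, div_pow, mul_pow]
      field_simp
    · have e : -t * w / 2 = -(t * w / 2) := by ring
      rw [e, Real.cosh_eq, Real.sinh_eq, Real.cosh_eq, Real.sinh_eq]
      simp
      field_simp
      ring
  refine ⟨h1, fun hne => ?_⟩
  have hd : w ^ 2 - c0 ^ 2 ≠ 0 := sub_ne_zero.mpr hne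
  have hp : w + c0 ≠ 0 := fun h => hd (by linear_combination (w - c0) * h)
  have hm : w - c0 ≠ 0 := fun h => hd (by linear_combination (w + c0) * h)
  refine hasSum_transfer (h1.mul_left (-2 / (w ^ 2 - c0 ^ 2))) ?_ ?_
  · intro n
    have h3 : (2 * (n : ℝ) + 3) ≠ 0 := by positivity
    have h4 : (Nat.factorial (2 * (n + 1)) : ℝ) ≠ 0 := by positivity
    field_simp
    ring
  · have e1 : (w + c0) / 2 * (-t) = -t * w / 2 - t * c0 / 2 := by ring
    have e2 : (w - c0) / 2 * t = t * w / 2 - t * c0 / 2 := by ring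
    have e3 : w ^ 2 - c0 ^ 2 = (w + c0) * (w - c0) := by ring
    rw [e1, e2, e3, Real.exp_sub, Real.exp_sub]
    have := Real.exp_ne_zero (t * c0 / 2)
    generalize Real.exp (t * c0 / 2) = X at *
    generalize Real.exp (-t * w / 2) = Y at *
    generalize Real.exp (t * w / 2) = Z at *
    field_simp
    ring
end

section
/- Let c0 ≥ 0, c1 > 0, a < 0, v0 ≥ 0 with c0² + 4·a·c1 < 0, v0·c0 + 2·|a| > 0 and 2·c1·v0 + c0 > 0. Then for every real t with cos(t·|w|/2) + (2·c1·v0 + c0)·S(t/2,|w|) ≠ 0 and sin(θ1 + t·|w|/2) ≠ 0, one has √(|a|/c1)·sin(θ0 − t·|w|/2)/sin(θ1 + t·|w|/2) = ( v0·cos(t·|w|/2) − (c0·v0 + 2·|a|)·S(t/2,|w|) ) / ( cos(t·|w|/2) + (2·c1·v0 + c0)·S(t/2,|w|) ). -/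
theorem arctan_aux (x y : ℝ) (hy : 0 < y) : ∃ R : ℝ, 0 < R ∧ R ^ 2 = x ^ 2 + y ^ 2 ∧
    R * Real.sin (Real.arctan (x / y)) = x ∧ R * Real.cos (Real.arctan (x / y)) = y := by
  have hp : 0 < 1 + (x / y) ^ 2 := by positivity
  have hs : 0 < Real.sqrt (1 + (x / y) ^ 2) := Real.sqrt_pos.mpr hp
  refine ⟨y * Real.sqrt (1 + (x / y) ^ 2), by positivity, ?_, ?_, ?_⟩
  · rw [mul_pow, Real.sq_sqrt hp.le]
    field_simp
    ring
  · rw [Real.sin_arctan]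
    field_simp
  · rw [Real.cos_arctan]
    field_simp

/-- stable rewriting of the speed in the complex-w case. -/
theorem stmt13 (c0 c1 a v0 : ℝ) (hc0 : 0 ≤ c0) (hc1 : 0 < c1) (ha : a < 0) (hv0 : 0 ≤ v0)
    (hdisc : c0 ^ 2 + 4 * a * c1 < 0)
    (h1 : 0 < v0 * c0 + 2 * |a|) (h2 : 0 < 2 * c1 * v0 + c0)
    (wabs θ0 θ1 : ℝ)
    (hwabs : wabs = Real.sqrt (-(c0 ^ 2 + 4 * a * c1)))
    (hθ0 : θ0 = Real.arctan (v0 * wabs / (v0 * c0 + 2 * |a|)))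
    (hθ1 : θ1 = Real.arctan (wabs / (2 * c1 * v0 + c0)))
    (S : ℝ → ℝ → ℝ) (hS : ∀ x u, S x u = Real.sin (u * x) / u)
    (t : ℝ)
    (hden1 : Real.cos (t * wabs / 2) + (2 * c1 * v0 + c0) * S (t / 2) wabs ≠ 0)
    (hden2 : Real.sin (θ1 + t * wabs / 2) ≠ 0) :
    Real.sqrt (|a| / c1) * Real.sin (θ0 - t * wabs / 2) / Real.sin (θ1 + t * wabs / 2)
      = (v0 * Real.cos (t * wabs / 2) - (c0 * v0 + 2 * |a|) * S (t / 2) wabs) /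
        (Real.cos (t * wabs / 2) + (2 * c1 * v0 + c0) * S (t / 2) wabs) := by
  have hw : 0 < wabs := by rw [hwabs]; exact Real.sqrt_pos.mpr (by linarith)
  have hw2 : wabs ^ 2 = -(c0 ^ 2 + 4 * a * c1) := by
    rw [hwabs]; exact Real.sq_sqrt (by linarith)
  rw [hS] at *
  rw [abs_of_neg ha] at *
  have e : wabs * (t / 2) = t * wabs / 2 := by ring
  rw [e] at *
  obtain ⟨R0, hR0, hR0s, hs0, hk0⟩ := arctan_aux (v0 * wabs) (v0 * c0 + 2 * -a) h1
  obtain ⟨R1, hR1, hR1s, hs1, hk1⟩ := arctan_aux wabs (2 * c1 * v0 + c0) h2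
  rw [← hθ0] at hs0 hk0
  rw [← hθ1] at hs1 hk1
  have hq : 0 ≤ -a / c1 := div_nonneg (by linarith) hc1.le
  have hR : R0 = Real.sqrt (-a / c1) * R1 := by
    rw [← abs_of_pos hR0, ← abs_of_nonneg (mul_nonneg (Real.sqrt_nonneg (-a / c1)) hR1.le),
      ← sq_eq_sq_iff_abs_eq_abs, mul_pow, Real.sq_sqrt hq, hR0s, hR1s, mul_pow, hw2]
    field_simp
    ring
  generalize t * wabs / 2 = φ at *
  have A : R0 * Real.sin (θ0 - φ)
      = v0 * wabs * Real.cos φ - (v0 * c0 + 2 * -a) * Real.sin φ := by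
    rw [Real.sin_sub, ← hs0, ← hk0]; ring
  have B : R1 * Real.sin (θ1 + φ)
      = wabs * Real.cos φ + (2 * c1 * v0 + c0) * Real.sin φ := by
    rw [Real.sin_add]
    linear_combination Real.cos φ * hs1 + Real.sin φ * hk1
  have N : v0 * Real.cos φ - (c0 * v0 + 2 * -a) * (Real.sin φ / wabs)
      = R0 * Real.sin (θ0 - φ) / wabs := by
    rw [A]; field_simp
  have D : Real.cos φ + (2 * c1 * v0 + c0) * (Real.sin φ / wabs)
      = R1 * Real.sin (θ1 + φ) / wabs := by
    rw [B]; field_simp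
  rw [N, D, hR]
  field_simp
end

section
/- Let c0 ≥ 0, c1 > 0, a ∈ ℝ, v0 ≥ 0 with w := √(c0² + 4·a·c1) > 0 and α := (w + c0)/2 ≠ 0, β := (w − c0)/2 ≠ 0, v∞ := β/c1. Then for every real t such that both logarithm arguments are positive, v∞·t + (1/c1)·log(1 − c1·(v∞ − v0)·E(−t,w)) = (1/c1)·log( 1 − c1·a·(1/w)·(E(t,β) + E(−t,α)) + c1·v0·E(−t,w)·exp(β·t) ). -/
/-- stable rewriting of the travelled space for real w. -/
theorem stmt14 (c0 c1 a v0 : ℝ) (hc0 : 0 ≤ c0) (hc1 : 0 < c1) (hv0 : 0 ≤ v0)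
    (w α β vinf : ℝ) (hw : w = Real.sqrt (c0 ^ 2 + 4 * a * c1)) (hwpos : 0 < w)
    (hα : α = (w + c0) / 2) (hαne : α ≠ 0) (hβ : β = (w - c0) / 2) (hβne : β ≠ 0)
    (hvinf : vinf = β / c1)
    (E : ℝ → ℝ → ℝ) (hE : ∀ t u, E t u = (1 - Real.exp (u * t)) / u)
    (t : ℝ)
    (hpos1 : 0 < 1 - c1 * (vinf - v0) * E (-t) w)
    (hpos2 : 0 < 1 - c1 * a * (1 / w) * (E t β + E (-t) α) +
        c1 * v0 * E (-t) w * Real.exp (β * t)) :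
    vinf * t + (1 / c1) * Real.log (1 - c1 * (vinf - v0) * E (-t) w)
      = (1 / c1) * Real.log (1 - c1 * a * (1 / w) * (E t β + E (-t) α) +
          c1 * v0 * E (-t) w * Real.exp (β * t)) := by
  have hwsq : w ^ 2 = c0 ^ 2 + 4 * a * c1 := by
    have h : 0 < c0 ^ 2 + 4 * a * c1 := by
      rw [hw] at hwpos
      exact Real.sqrt_pos.mp hwpos
    rw [hw, Real.sq_sqrt h.le]
  have hac : c1 * a = α * β := by
    rw [hα, hβ]; linarith
  have hsum : w = α + β := by rw [hα, hβ]; ring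
  have hwne : α + β ≠ 0 := by rw [← hsum]; exact hwpos.ne'
  have hvc : c1 * (vinf - v0) = β - c1 * v0 := by
    rw [hvinf]; field_simp
  have hexp : Real.exp (β * t) * Real.exp (w * -t) = Real.exp (α * -t) := by
    rw [← Real.exp_add, hsum]; congr 1; ring
  have key : 1 - c1 * a * (1 / w) * (E t β + E (-t) α) +
          c1 * v0 * E (-t) w * Real.exp (β * t)
      = Real.exp (β * t) * (1 - c1 * (vinf - v0) * E (-t) w) := by
    rw [hac, hvc, hE, hE, hE, ← hexp, hsum]
    field_simp
    ring
  rw [key, Real.log_mul (Real.exp_pos _).ne' hpos1.ne', Real.log_exp, hvinf]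
  ring
end

section
/- Let f be twice continuously differentiable on a closed finite interval [a,b] with f(a)·f(b) < 0, f'(x) ≠ 0 for all x ∈ [a,b], and f''(x) ≥ 0 for all x ∈ [a,b]. If x0 ∈ [a,b] satisfies f(x0) ≥ 0, then the Newton sequence x_{k+1} := x_k − f(x_k)/f'(x_k) is well defined, stays in [a,b], is monotone, and converges to the unique zero of f in [a,b]. (Analogously, if f''(x) ≤ 0 on [a,b] and f(x0) ≤ 0.) -/
open Set Filter Topology in
theorem newton_core (a b : ℝ) (hab : a < b) (f f' : ℝ → ℝ)
    (hc : ContinuousOn f (Icc a b)) (hc' : ContinuousOn f' (Icc a b))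
    (ht : ∀ u ∈ Icc a b, ∀ v ∈ Icc a b, f u + f' u * (v - u) ≤ f v)
    (hpos : ∀ u ∈ Icc a b, 0 < f' u)
    (hsign : f a * f b < 0) (x : ℕ → ℝ) (h0 : x 0 ∈ Icc a b) (hf0 : 0 ≤ f (x 0))
    (hrec : ∀ k, x (k + 1) = x k - f (x k) / f' (x k)) :
    (∀ k, x k ∈ Icc a b) ∧ Antitone x ∧
    ∃ r ∈ Icc a b, f r = 0 ∧ (∀ y ∈ Icc a b, f y = 0 → y = r) ∧
      Tendsto x atTop (𝓝 r) := by
  have hm : StrictMonoOn f (Icc a b) := by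
    intro u hu v hv huv
    have h1 := ht u hu v hv
    have h2 := mul_pos (hpos u hu) (sub_pos.2 huv)
    linarith
  have ha : a ∈ Icc a b := ⟨le_rfl, hab.le⟩
  have hb : b ∈ Icc a b := ⟨hab.le, le_rfl⟩
  have hlt := hm ha hb hab
  have hfa : f a < 0 := by
    by_contra h
    push Not at h
    nlinarith
  have hfb : 0 < f b := by
    by_contra h
    push Not at h
    nlinarith
  obtain ⟨r, hr, hfr⟩ := intermediate_value_Icc hab.le hc ⟨hfa.le, hfb.le⟩
  have huniq : ∀ y ∈ Icc a b, f y = 0 → y = r := fun y hy h =>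
    hm.injOn hy hr (h.trans hfr.symm)
  have hinv : ∀ k, x k ∈ Icc r b := by
    intro k
    induction k with
    | zero =>
      refine ⟨?_, h0.2⟩
      rw [← hm.le_iff_le hr h0, hfr]; exact hf0
    | succ k ih =>
      have hk : x k ∈ Icc a b := ⟨hr.1.trans ih.1, ih.2⟩
      have hp := hpos _ hk
      have hfk : 0 ≤ f (x k) := by
        rw [← hfr]; exact (hm.le_iff_le hr hk).2 ih.1
      have h1 := ht _ hk r hr
      have h2 : f (x k) / f' (x k) ≤ x k - r := by
        rw [div_le_iff₀ hp]; nlinarith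
      have h3 : 0 ≤ f (x k) / f' (x k) := div_nonneg hfk hp.le
      rw [hrec]
      exact ⟨by linarith, by linarith [ih.2]⟩
  have hmem : ∀ k, x k ∈ Icc a b := fun k => ⟨hr.1.trans (hinv k).1, (hinv k).2⟩
  have hanti : Antitone x := by
    refine antitone_nat_of_succ_le fun k => ?_
    have hfk : 0 ≤ f (x k) := by
      rw [← hfr]; exact (hm.le_iff_le hr (hmem k)).2 (hinv k).1
    have h3 : 0 ≤ f (x k) / f' (x k) := div_nonneg hfk (hpos _ (hmem k)).le
    rw [hrec]; linarith
  refine ⟨hmem, hanti, r, hr, hfr, huniq, ?_⟩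
  have hbdd : BddBelow (range x) := ⟨r, by rintro _ ⟨k, rfl⟩; exact (hinv k).1⟩
  have hL := tendsto_atTop_ciInf hanti hbdd
  set L := ⨅ i, x i
  have hLm : L ∈ Icc a b := isClosed_Icc.mem_of_tendsto hL (Eventually.of_forall hmem)
  have hLw : Tendsto x atTop (𝓝[Icc a b] L) :=
    tendsto_nhdsWithin_iff.2 ⟨hL, Eventually.of_forall hmem⟩
  have h1 : Tendsto (fun k => f (x k)) atTop (𝓝 (f L)) := (hc L hLm).tendsto.comp hLw
  have h2 : Tendsto (fun k => f' (x k)) atTop (𝓝 (f' L)) := (hc' L hLm).tendsto.comp hLw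
  have h3 := h2.mul (hL.sub (hL.comp (tendsto_add_atTop_nat 1)))
  have h4 : (fun k => f (x k)) = fun k => f' (x k) * (x k - (x ∘ fun k => k + 1) k) := by
    funext k
    have := (hpos _ (hmem k)).ne'
    simp only [Function.comp, hrec]
    field_simp
    ring
  rw [← h4] at h3
  have h5 := tendsto_nhds_unique h1 h3
  rw [sub_self, mul_zero] at h5
  rw [← huniq L hLm h5]
  exact hL

open Set Filter Topology in
theorem newton_convex (a b : ℝ) (hab : a < b) (f f' f'' : ℝ → ℝ)
    (hd1 : ∀ x ∈ Icc a b, HasDerivWithinAt f (f' x) (Icc a b) x)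
    (hd2 : ∀ x ∈ Icc a b, HasDerivWithinAt f' (f'' x) (Icc a b) x)
    (hsign : f a * f b < 0)
    (hne : ∀ x ∈ Icc a b, f' x ≠ 0)
    (h2 : ∀ x ∈ Icc a b, 0 ≤ f'' x)
    (x : ℕ → ℝ) (h0 : x 0 ∈ Icc a b) (hf0 : 0 ≤ f (x 0))
    (hrec : ∀ k, x (k + 1) = x k - f (x k) / f' (x k)) :
    (∀ k, x k ∈ Icc a b) ∧ (Monotone x ∨ Antitone x) ∧
    ∃ r ∈ Icc a b, f r = 0 ∧ (∀ y ∈ Icc a b, f y = 0 → y = r) ∧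
      Tendsto x atTop (𝓝 r) := by
  have hc : ContinuousOn f (Icc a b) := fun t h => (hd1 t h).continuousWithinAt
  have hc' : ContinuousOn f' (Icc a b) := fun t h => (hd2 t h).continuousWithinAt
  have mvt : ∀ g g' : ℝ → ℝ, (∀ x ∈ Icc a b, HasDerivWithinAt g (g' x) (Icc a b) x) →
      ∀ u ∈ Icc a b, ∀ v ∈ Icc a b, u < v → ∃ c ∈ Ioo u v, g v - g u = g' c * (v - u) := by
    intro g g' hg u hu v hv huv
    obtain ⟨c, hcm, h⟩ := exists_hasDerivAt_eq_slope g g' huv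
      (fun t ht => ((hg t ⟨hu.1.trans ht.1, ht.2.trans hv.2⟩).continuousWithinAt).mono
        (Icc_subset_Icc hu.1 hv.2))
      (fun t ht => (hg t ⟨hu.1.trans ht.1.le, ht.2.le.trans hv.2⟩).hasDerivAt
        (Icc_mem_nhds (hu.1.trans_lt ht.1) (ht.2.trans_le hv.2)))
    refine ⟨c, hcm, ?_⟩
    rw [h, div_mul_cancel₀ _ (sub_pos.2 huv).ne']
  have hmono : ∀ u ∈ Icc a b, ∀ v ∈ Icc a b, u < v → f' u ≤ f' v := by
    intro u hu v hv huv
    obtain ⟨c, hcm, h⟩ := mvt f' f'' hd2 u hu v hv huv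
    have := mul_nonneg (h2 c ⟨hu.1.trans hcm.1.le, hcm.2.le.trans hv.2⟩) (sub_pos.2 huv).le
    linarith
  have ht : ∀ u ∈ Icc a b, ∀ v ∈ Icc a b, f u + f' u * (v - u) ≤ f v := by
    intro u hu v hv
    rcases lt_trichotomy u v with h | h | h
    · obtain ⟨c, hcm, e⟩ := mvt f f' hd1 u hu v hv h
      have := hmono u hu c ⟨hu.1.trans hcm.1.le, hcm.2.le.trans hv.2⟩ hcm.1
      nlinarith
    · subst h; simp
    · obtain ⟨c, hcm, e⟩ := mvt f f' hd1 v hv u hu h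
      have := hmono c ⟨hv.1.trans hcm.1.le, hcm.2.le.trans hu.2⟩ u hu hcm.2
      nlinarith
  have hs : (∀ u ∈ Icc a b, 0 < f' u) ∨ (∀ u ∈ Icc a b, f' u < 0) := by
    by_contra h
    push Not at h
    obtain ⟨⟨u, hu, hu'⟩, v, hv, hv'⟩ := h
    obtain ⟨c, hcm, e⟩ := isPreconnected_Icc.intermediate_value hu hv hc' ⟨hu', hv'⟩
    exact hne c hcm e
  rcases hs with hs | hs
  · obtain ⟨p, q, r⟩ := newton_core a b hab f f' hc hc' ht hs hsign x h0 hf0 hrec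
    exact ⟨p, Or.inr q, r⟩
  · have hn : ∀ u ∈ Icc (-b) (-a), -u ∈ Icc a b := fun u hu =>
      ⟨by linarith [hu.2], by linarith [hu.1]⟩
    obtain ⟨p, q, r, hr, e, un, lim⟩ := newton_core (-b) (-a) (by linarith) (fun t => f (-t))
      (fun t => - f' (-t)) (hc.comp continuousOn_neg hn) (hc'.comp continuousOn_neg hn).neg
      (fun u hu v hv => by
        have := ht _ (hn u hu) _ (hn v hv)
        linarith)
      (fun u hu => by linarith [hs _ (hn u hu)]) (by simpa [mul_comm] using hsign)
      (fun k => - x k) ⟨by linarith [h0.2], by linarith [h0.1]⟩ (by simpa using hf0)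
      (fun k => by simp only [neg_neg, hrec k, div_neg]; ring)
    refine ⟨fun k => by simpa using hn _ (p k), Or.inl fun i j h => by
      have := q h
      simpa using this, -r, hn r hr, e, fun y hy h => ?_, by simpa using lim.neg⟩
    have := un (-y) ⟨by linarith [hy.2], by linarith [hy.1]⟩ (by simpa using h)
    linarith

/-- global monotone convergence of Newton's method on [a,b] for a C² function
with f(a)·f(b) < 0, nonvanishing f', and convex (resp. concave) f with f(x0) ≥ 0
(resp. f(x0) ≤ 0). -/
theorem stmt16 (a b : ℝ) (hab : a < b) (f f' f'' : ℝ → ℝ)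
    (hd1 : ∀ x ∈ Set.Icc a b, HasDerivWithinAt f (f' x) (Set.Icc a b) x)
    (hd2 : ∀ x ∈ Set.Icc a b, HasDerivWithinAt f' (f'' x) (Set.Icc a b) x)
    (hcont : ContinuousOn f'' (Set.Icc a b))
    (hsign : f a * f b < 0)
    (hne : ∀ x ∈ Set.Icc a b, f' x ≠ 0)
    (x0 : ℝ) (hx0 : x0 ∈ Set.Icc a b)
    (hcase : ((∀ x ∈ Set.Icc a b, 0 ≤ f'' x) ∧ 0 ≤ f x0) ∨
             ((∀ x ∈ Set.Icc a b, f'' x ≤ 0) ∧ f x0 ≤ 0))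
    (x : ℕ → ℝ) (hx : x 0 = x0)
    (hrec : ∀ k, x (k + 1) = x k - f (x k) / f' (x k)) :
    (∀ k, x k ∈ Set.Icc a b) ∧ (Monotone x ∨ Antitone x) ∧
    ∃ r ∈ Set.Icc a b, f r = 0 ∧ (∀ y ∈ Set.Icc a b, f y = 0 → y = r) ∧
      Filter.Tendsto x Filter.atTop (nhds r) := by
  subst hx
  rcases hcase with ⟨h2, h0⟩ | ⟨h2, h0⟩
  · exact newton_convex a b hab f f' f'' hd1 hd2 hsign hne h2 x hx0 h0 hrec
  · obtain ⟨p, q, r, hr, e, un, lim⟩ := newton_convex a b hab (fun t => - f t) (fun t => - f' t)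
      (fun t => - f'' t) (fun t h => (hd1 t h).neg) (fun t h => (hd2 t h).neg)
      (by linarith) (fun t h => neg_ne_zero.2 (hne t h)) (fun t h => by linarith [h2 t h]) x hx0
      (by linarith) (fun k => by rw [hrec k, neg_div_neg_eq])
    exact ⟨p, q, r, hr, by linarith, fun y hy h => un y hy (by linarith), lim⟩
end

section
/- Let t_min < t_max (with t_max possibly +∞), and let f be twice continuously differentiable on (t_min, t_max) with f'(t) > 0 on (t_min, t_max), f'' of constant sign on (t_min, t_max), lim_{t → t_min⁺} f(t) = −∞, and a (necessarily unique) root t⋆ ∈ (t_min, t_max) with f(t⋆) = 0. Define the modified Newton iteration: t_{k+1} := t_k − f(t_k)/( f'(t_k) + f(t_k)/(t_k − t_min) ) if f(t_k) > 0, and t_{k+1} := t_k − f(t_k)/f'(t_k) otherwise. Then for any starting point t_0 ∈ (t_min, t_max) the sequence (t_k) remains in (t_min, t_max) and converges to t⋆, and the convergence is quadratic: there exists C ≥ 0 such that lim_{k→∞} |t_{k+1} − t⋆|/|t_k − t⋆|² = C whenever t_k ≠ t⋆ for all k. -/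
open Filter Topology Set

lemma aux_mvt {D : Set ℝ} (hD : D.OrdConnected) {f f' : ℝ → ℝ}
    (h : ∀ t ∈ D, HasDerivAt f (f' t) t) {x y : ℝ} (hx : x ∈ D) (hy : y ∈ D) (hxy : x < y) :
    ∃ c, x < c ∧ c < y ∧ c ∈ D ∧ f y - f x = f' c * (y - x) := by
  have hsub : Icc x y ⊆ D := hD.out hx hy
  obtain ⟨c, hc, he⟩ := exists_hasDerivAt_eq_slope f f' hxy
    (fun z hz => (h z (hsub hz)).continuousAt.continuousWithinAt)
    (fun z hz => h z (hsub (Ioo_subset_Icc_self hz)))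
  refine ⟨c, hc.1, hc.2, hsub (Ioo_subset_Icc_self hc), ?_⟩
  have : y - x ≠ 0 := by linarith
  rw [he]; field_simp

lemma aux_tangent {D : Set ℝ} (hD : D.OrdConnected) {f f' f'' : ℝ → ℝ}
    (h1 : ∀ t ∈ D, HasDerivAt f (f' t) t) (h2 : ∀ t ∈ D, HasDerivAt f' (f'' t) t)
    (hs : ∀ t ∈ D, f'' t ≤ 0) {x y : ℝ} (hx : x ∈ D) (hy : y ∈ D) :
    f y ≤ f x + f' x * (y - x) := by
  rcases lt_trichotomy x y with h | h | h
  · obtain ⟨c, hxc, hcy, hc, e⟩ := aux_mvt hD h1 hx hy h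
    obtain ⟨d, _, _, hd, e'⟩ := aux_mvt hD h2 hx hc hxc
    have : f' c ≤ f' x := by nlinarith [hs d hd]
    nlinarith
  · subst h; simp
  · obtain ⟨c, hxc, hcy, hc, e⟩ := aux_mvt hD h1 hy hx h
    obtain ⟨d, _, _, hd, e'⟩ := aux_mvt hD h2 hc hx hcy
    have : f' x ≤ f' c := by nlinarith [hs d hd]
    nlinarith

lemma aux_quad {F F' F'' : ℝ → ℝ} {a : ℝ} (h1 : ∀ᶠ x in 𝓝 a, HasDerivAt F (F' x) x)
    (h2 : ∀ᶠ x in 𝓝 a, HasDerivAt F' (F'' x) x) (hc : ContinuousAt F'' a)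
    (h0 : F a = 0) (hp : F' a ≠ 0) :
    Tendsto (fun x => (x - F x / F' x - a) / (x - a) ^ 2) (𝓝[≠] a)
      (𝓝 (F'' a / 2 / F' a)) := by
  have c1 : ContinuousAt F a := h1.self_of_nhds.continuousAt
  have c2 : ContinuousAt F' a := h2.self_of_nhds.continuousAt
  have key : Tendsto (fun x => ((x - a) * F' x - F x) / (x - a) ^ 2) (𝓝[≠] a)
      (𝓝 (F'' a / 2)) := by
    apply HasDerivAt.lhopital_zero_nhdsNE (f' := fun x => (x - a) * F'' x)
      (g' := fun x => 2 * (x - a))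
    · filter_upwards [h1.filter_mono nhdsWithin_le_nhds, h2.filter_mono nhdsWithin_le_nhds]
        with x hx hx2
      have := ((((hasDerivAt_id x).sub_const a).mul hx2).sub hx)
      exact this.congr_deriv (by simp)
    · refine Eventually.of_forall fun x => ?_
      have := (((hasDerivAt_id x).sub_const a).pow 2)
      exact this.congr_deriv (by simp)
    · filter_upwards [self_mem_nhdsWithin] with x hx
      have : x - a ≠ 0 := sub_ne_zero.2 hx
      simpa using this
    · have : ContinuousAt (fun x => (x - a) * F' x - F x) a := by fun_prop
      have := this.tendsto
      simp only [sub_self, zero_mul, h0] at this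
      exact this.mono_left nhdsWithin_le_nhds
    · have : ContinuousAt (fun x : ℝ => (x - a) ^ 2) a := by fun_prop
      have := this.tendsto
      simp only [sub_self] at this
      norm_num at this
      exact this.mono_left nhdsWithin_le_nhds
    · have : Tendsto (fun x => F'' x / 2) (𝓝[≠] a) (𝓝 (F'' a / 2)) :=
        (hc.tendsto.div_const 2).mono_left nhdsWithin_le_nhds
      refine this.congr' ?_
      filter_upwards [self_mem_nhdsWithin] with x hx
      have : x - a ≠ 0 := sub_ne_zero.2 hx
      field_simp
  have := key.div (c2.tendsto.mono_left nhdsWithin_le_nhds) hp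
  refine this.congr' ?_
  filter_upwards [self_mem_nhdsWithin,
    (c2.eventually_ne hp).filter_mono nhdsWithin_le_nhds] with x hx hx2
  have : x - a ≠ 0 := sub_ne_zero.2 hx
  simp only [Pi.div_apply]
  field_simp
  ring

lemma aux_fix {F F' : ℝ → ℝ} {L : ℝ} {u : ℕ → ℝ} (hu : Tendsto u atTop (𝓝 L))
    (c1 : ContinuousAt F L) (c2 : ContinuousAt F' L) (hp : F' L ≠ 0)
    (hr : ∀ k, u (k + 1) = u k - F (u k) / F' (u k)) : F L = 0 := by
  have a1 : Tendsto (fun k => u (k + 1)) atTop (𝓝 L) := (tendsto_add_atTop_iff_nat 1).2 hu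
  have a2 : Tendsto (fun k => u k - F (u k) / F' (u k)) atTop (𝓝 (L - F L / F' L)) :=
    hu.sub ((c1.tendsto.comp hu).div (c2.tendsto.comp hu) hp)
  have := tendsto_nhds_unique a1 (a2.congr fun k => (hr k).symm)
  have h : F L / F' L = 0 := by linarith
  simpa [hp] using h

lemma aux_final {F F' F'' : ℝ → ℝ} {a : ℝ} {t : ℕ → ℝ} (N : ℕ)
    (h1 : ∀ᶠ x in 𝓝 a, HasDerivAt F (F' x) x)
    (h2 : ∀ᶠ x in 𝓝 a, HasDerivAt F' (F'' x) x) (hc : ContinuousAt F'' a)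
    (h0 : F a = 0) (hp : F' a ≠ 0)
    (hr : ∀ k, t (k + N + 1) = t (k + N) - F (t (k + N)) / F' (t (k + N)))
    (ht : Tendsto t atTop (𝓝 a)) (hne : ∀ k, t k ≠ a) :
    ∃ C : ℝ, 0 ≤ C ∧
        Tendsto (fun k => |t (k + 1) - a| / |t k - a| ^ 2) atTop (𝓝 C) := by
  refine ⟨|F'' a / 2 / F' a|, abs_nonneg _, ?_⟩
  have q := (aux_quad h1 h2 hc h0 hp).abs
  have ht' : Tendsto t atTop (𝓝[≠] a) :=
    tendsto_nhdsWithin_iff.2 ⟨ht, Eventually.of_forall hne⟩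
  refine (q.comp ht').congr' ?_
  filter_upwards [eventually_ge_atTop N] with k hk
  obtain ⟨j, rfl⟩ := Nat.exists_eq_add_of_le' hk
  simp only [Function.comp]
  rw [hr j, abs_div, abs_pow]


/-- the modified Newton iteration stays in the domain (t_min, t_max),
converges to the unique root t⋆, and the convergence is quadratic. -/
theorem stmt17 (tmin : ℝ) (tmax : EReal) (hlt : (tmin : EReal) < tmax)
    (D : Set ℝ) (hD : D = {t : ℝ | tmin < t ∧ (t : EReal) < tmax})
    (f f' f'' : ℝ → ℝ)
    (hd1 : ∀ t ∈ D, HasDerivAt f (f' t) t)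
    (hd2 : ∀ t ∈ D, HasDerivAt f' (f'' t) t)
    (hcont : ContinuousOn f'' D)
    (hfp : ∀ t ∈ D, 0 < f' t)
    (hsignconst : (∀ t ∈ D, 0 ≤ f'' t) ∨ (∀ t ∈ D, f'' t ≤ 0))
    (hbot : Filter.Tendsto f (nhdsWithin tmin D) Filter.atBot)
    (tstar : ℝ) (hstar : tstar ∈ D) (hroot : f tstar = 0)
    (t0 : ℝ) (ht0 : t0 ∈ D)
    (t : ℕ → ℝ) (hinit : t 0 = t0)
    (hrec : ∀ k, t (k + 1) =
        if 0 < f (t k)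
        then t k - f (t k) / (f' (t k) + f (t k) / (t k - tmin))
        else t k - f (t k) / f' (t k)) :
    (∀ k, t k ∈ D) ∧ Filter.Tendsto t Filter.atTop (nhds tstar) ∧
    ((∀ k, t k ≠ tstar) →
      ∃ C : ℝ, 0 ≤ C ∧
        Filter.Tendsto (fun k => |t (k + 1) - tstar| / |t k - tstar| ^ 2)
          Filter.atTop (nhds C)) := by

  have hoc : D.OrdConnected := by
    rw [hD]
    refine ⟨fun x hx y hy z hz => ⟨lt_of_lt_of_le hx.1 hz.1, lt_of_le_of_lt ?_ hy.2⟩⟩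
    exact_mod_cast hz.2
  have hopen : IsOpen D := by
    rw [hD]
    exact (isOpen_lt continuous_const continuous_id).inter
      (isOpen_lt continuous_coe_real_ereal continuous_const)
  have hmin : ∀ x ∈ D, tmin < x := fun x hx => by rw [hD] at hx; exact hx.1
  have hdown : ∀ x y, y ∈ D → tmin < x → x ≤ y → x ∈ D := fun x y hy h1 h2 => by
    rw [hD] at hy ⊢
    refine ⟨h1, lt_of_le_of_lt ?_ hy.2⟩
    exact_mod_cast h2
  have hneg : ∀ t ∈ D, f'' t ≤ 0 := by
    rcases hsignconst with hs | hs
    · exfalso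
      have tan : ∀ y ∈ D, -f y ≤ -f tstar + -f' tstar * (y - tstar) := fun y hy =>
        aux_tangent (f := fun x => -f x) (f' := fun x => -f' x) (f'' := fun x => -f'' x) hoc
          (fun x hx => (hd1 x hx).neg) (fun x hx => (hd2 x hx).neg)
          (fun x hx => by simpa using hs x hx) hstar hy
      have hnb : (𝓝[D] tmin).NeBot := by
        have hsub : Ioo tmin tstar ⊆ D := fun x hx => hdown x tstar hstar hx.1 hx.2.le
        have : (𝓝[Ioo tmin tstar] tmin).NeBot := by
          rw [nhdsWithin_Ioo_eq_nhdsGT (hmin _ hstar)]; infer_instance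
        exact this.mono (nhdsWithin_mono _ hsub)
      have ev := hbot.eventually (eventually_lt_atBot (-(f' tstar * (tstar - tmin))))
      obtain ⟨y, hy1, hy2⟩ := (ev.and self_mem_nhdsWithin).exists
      have a := tan y hy2
      have b := hmin y hy2
      have c := hfp _ hstar
      rw [hroot] at a
      nlinarith
    · exact hs
  have tan : ∀ x ∈ D, ∀ y ∈ D, f y ≤ f x + f' x * (y - x) := fun x hx y hy =>
    aux_tangent hoc hd1 hd2 hneg hx hy
  have hmono : ∀ x ∈ D, ∀ y ∈ D, x < y → f x < f y := fun x hx y hy hxy => by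
    obtain ⟨c, _, _, hc, e⟩ := aux_mvt hoc hd1 hx hy hxy
    have := mul_pos (hfp c hc) (sub_pos.2 hxy)
    linarith
  have huniq : ∀ x ∈ D, f x = 0 → x = tstar := fun x hx h => by
    rcases lt_trichotomy x tstar with h' | h' | h'
    · have := hmono _ hx _ hstar h'; linarith
    · exact h'
    · have := hmono _ hstar _ hx h'; linarith
  have hle : ∀ x ∈ D, f x ≤ 0 → x ≤ tstar := fun x hx h => by
    by_contra! h'
    have := hmono _ hstar _ hx h'; linarith
  have hgt : ∀ x ∈ D, 0 < f x → tstar ≤ x := fun x hx h => by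
    by_contra! h'
    have := hmono _ hx _ hstar h'; linarith
  -- left step
  have hleft : ∀ x ∈ D, f x ≤ 0 → x ≤ x - f x / f' x ∧ x - f x / f' x ∈ D ∧
      f (x - f x / f' x) ≤ 0 := fun x hx h => by
    have hp := hfp x hx
    have a : f x / f' x ≤ 0 := div_nonpos_of_nonpos_of_nonneg h hp.le
    have e : f x / f' x * f' x = f x := div_mul_cancel₀ _ hp.ne'
    have b : x - f x / f' x ≤ tstar := by
      have := tan x hx _ hstar
      rw [hroot] at this
      by_contra! h'
      nlinarith
    have m := hdown _ _ hstar (by linarith [hmin x hx]) b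
    refine ⟨by linarith, m, ?_⟩
    have := tan x hx _ m
    nlinarith
  have hden : ∀ x ∈ D, 0 ≤ f x → 0 < f x + (x - tmin) * f' x := fun x hx h => by
    have := mul_pos (sub_pos.2 (hmin x hx)) (hfp x hx)
    linarith
  have hform : ∀ x ∈ D, 0 < f x → x - f x / (f' x + f x / (x - tmin)) =
      x - ((x - tmin) * f x) / (f x + (x - tmin) * f' x) := fun x hx h => by
    have h1 := hden x hx h.le
    have h2 := sub_pos.2 (hmin x hx)
    have h3 : f' x + f x / (x - tmin) = (f x + (x - tmin) * f' x) / (x - tmin) := by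
      field_simp; ring
    rw [h3, div_div_eq_mul_div, mul_comm (f x)]
  have hright : ∀ x ∈ D, 0 < f x → 
      x - ((x - tmin) * f x) / (f x + (x - tmin) * f' x) ≤ x ∧
      x - ((x - tmin) * f x) / (f x + (x - tmin) * f' x) ∈ D := fun x hx h => by
    have h1 := hden x hx h.le
    have h2 := sub_pos.2 (hmin x hx)
    have h3 : 0 ≤ ((x - tmin) * f x) / (f x + (x - tmin) * f' x) := by positivity
    have h4 : ((x - tmin) * f x) / (f x + (x - tmin) * f' x) < x - tmin := by
      rw [div_lt_iff₀ h1]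
      have := mul_pos h2 (mul_pos h2 (hfp x hx))
      linarith
    exact ⟨by linarith, hdown _ x hx (by linarith) (by linarith)⟩
  have hmem : ∀ k, t k ∈ D := by
    intro k
    induction k with
    | zero => rw [hinit]; exact ht0
    | succ k ih =>
      rw [hrec k]
      split_ifs with h
      · rw [hform _ ih h]; exact (hright _ ih h).2
      · exact (hleft _ ih (not_lt.1 h)).2.1
  have hnhds : ∀ x ∈ D, ∀ᶠ y in 𝓝 x, y ∈ D := fun x hx => hopen.mem_nhds hx
  refine ⟨hmem, ?_⟩
  by_cases hN : ∃ N, f (t N) ≤ 0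
  · obtain ⟨N, hN⟩ := hN
    have hall : ∀ k, f (t (k + N)) ≤ 0 := by
      intro k
      induction k with
      | zero => simpa using hN
      | succ k ih =>
        rw [show k + 1 + N = k + N + 1 by ring, hrec, if_neg (not_lt.2 ih)]
        exact (hleft _ (hmem _) ih).2.2
    have hr : ∀ k, t (k + N + 1) = t (k + N) - f (t (k + N)) / f' (t (k + N)) := fun k => by
      rw [hrec, if_neg (not_lt.2 (hall k))]
    have hr' : ∀ k, t (k + 1 + N) = t (k + N) - f (t (k + N)) / f' (t (k + N)) := fun k => by
      rw [← hr k]; congr 1; ring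
    have hmon : Monotone (fun k => t (k + N)) := monotone_nat_of_le_succ fun k => by
      rw [hr' k]; exact (hleft _ (hmem _) (hall k)).1
    have hbd : ∀ k, t (k + N) ≤ tstar := fun k => hle _ (hmem _) (hall k)
    have hlim := tendsto_atTop_ciSup hmon ⟨tstar, by rintro _ ⟨k, rfl⟩; exact hbd k⟩
    set L := ⨆ k, t (k + N)
    have hL1 : L ≤ tstar := le_of_tendsto' hlim hbd
    have hL2 : t (0 + N) ≤ L := hmon.ge_of_tendsto hlim 0
    have hLD : L ∈ D := hoc.out (hmem _) hstar ⟨hL2, hL1⟩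
    have hfL : f L = 0 := aux_fix hlim (hd1 L hLD).continuousAt (hd2 L hLD).continuousAt
      (hfp L hLD).ne' hr'
    rw [huniq L hLD hfL] at hlim
    have hT : Tendsto t atTop (𝓝 tstar) := (tendsto_add_atTop_iff_nat N).1 hlim
    refine ⟨hT, fun hne => ?_⟩
    exact aux_final N ((hnhds _ hstar).mono hd1) ((hnhds _ hstar).mono hd2)
      (hcont.continuousAt (hopen.mem_nhds hstar)) hroot (hfp _ hstar).ne' hr hT hne
  · push Not at hN
    have hr : ∀ k, t (k + 1) = t k - ((t k - tmin) * f (t k)) /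
        (f (t k) + (t k - tmin) * f' (t k)) := fun k => by
      rw [hrec, if_pos (hN k), hform _ (hmem k) (hN k)]
    have hmon : Antitone t := antitone_nat_of_succ_le fun k => by
      rw [hr k]; exact (hright _ (hmem _) (hN k)).1
    have hbd : ∀ k, tstar ≤ t k := fun k => hgt _ (hmem _) (hN k)
    have hlim := tendsto_atTop_ciInf hmon ⟨tstar, by rintro _ ⟨k, rfl⟩; exact hbd k⟩
    set L := ⨅ k, t k
    have hL1 : tstar ≤ L := ge_of_tendsto' hlim hbd
    have hL2 : L ≤ t 0 := hmon.le_of_tendsto hlim 0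
    have hLD : L ∈ D := hoc.out hstar (hmem _) ⟨hL1, hL2⟩
    have cf : ∀ x ∈ D, ContinuousAt f x := fun x hx => (hd1 x hx).continuousAt
    have cf' : ∀ x ∈ D, ContinuousAt f' x := fun x hx => (hd2 x hx).continuousAt
    have cL := cf L hLD
    have cL' := cf' L hLD
    have hfL0 : 0 ≤ f L := ge_of_tendsto' (cL.tendsto.comp hlim) fun k => (hN k).le
    have hgL : (L - tmin) * f L = 0 := aux_fix (F := fun x => (x - tmin) * f x)
      (F' := fun x => f x + (x - tmin) * f' x) hlim (by fun_prop) (by fun_prop)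
      (hden L hLD hfL0).ne' hr
    have hfL : f L = 0 := by
      rcases mul_eq_zero.1 hgL with h | h
      · have := hmin L hLD; linarith
      · exact h
    rw [huniq L hLD hfL] at hlim
    refine ⟨hlim, fun hne => ?_⟩
    have cc := hcont.continuousAt (hopen.mem_nhds hstar)
    have c1 := cf' _ hstar
    refine aux_final (F := fun x => (x - tmin) * f x)
      (F' := fun x => f x + (x - tmin) * f' x)
      (F'' := fun x => f' x + (f' x + (x - tmin) * f'' x)) 0 ?_ ?_ (by fun_prop)
      (by simp [hroot]) (hden _ hstar hroot.ge).ne' hr hlim hne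
    · refine (hnhds _ hstar).mono fun x hx => ?_
      have := ((hasDerivAt_id x).sub_const tmin).mul (hd1 x hx)
      exact this.congr_deriv (by simp)
    · refine (hnhds _ hstar).mono fun x hx => ?_
      have := (hd1 x hx).add (((hasDerivAt_id x).sub_const tmin).mul (hd2 x hx))
      exact this.congr_deriv (by simp)
end

section
/- Let c0 ≥ 0, c1 > 0, a > 0, and 0 ≤ v0 < v∞ := β/c1, where w := √(c0² + 4·a·c1) > 0. Let v(t) := v0 + (a0 − a)·E(t,w)/(1 − γ·E(t,w)). Then 1 − γ·E(t,w) > 0 for all t ≥ 0, v is strictly increasing on [0, ∞), and lim_{t → ∞} v(t) = v∞ = β/c1. -/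
/-- for positive acceleration and v0 < v∞ the speed v(t) is defined for all
t ≥ 0 (positive denominator), strictly increasing on [0,∞), and tends to v∞ = β/c1. -/
theorem stmt18 (c0 c1 a v0 : ℝ) (hc0 : 0 ≤ c0) (hc1 : 0 < c1) (ha : 0 < a) (hv0 : 0 ≤ v0)
    (w α β γ a0 vinf : ℝ) (hw : w = Real.sqrt (c0 ^ 2 + 4 * a * c1)) (hwpos : 0 < w)
    (hα : α = (w + c0) / 2) (hβ : β = (w - c0) / 2) (hγ : γ = c1 * v0 + α)
    (ha0 : a0 = (c1 * v0 + c0) * v0) (hvinf : vinf = β / c1) (hlt : v0 < vinf)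
    (E : ℝ → ℝ → ℝ) (hE : ∀ t u, E t u = (1 - Real.exp (u * t)) / u)
    (v : ℝ → ℝ) (hv : ∀ t, v t = v0 + (a0 - a) * E t w / (1 - γ * E t w)) :
    (∀ t : ℝ, 0 ≤ t → 0 < 1 - γ * E t w) ∧
    StrictMonoOn v (Set.Ici (0 : ℝ)) ∧
    Filter.Tendsto v Filter.atTop (nhds vinf) := by
  have hw2 : w ^ 2 = c0 ^ 2 + 4 * a * c1 := by
    rw [hw, Real.sq_sqrt (by positivity)]
  have hb : c1 * vinf = β := by rw [hvinf]; field_simp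
  have hαpos : 0 < α := by rw [hα]; linarith
  have hγpos : 0 < γ := by rw [hγ]; positivity
  have hab : α * β = a * c1 := by rw [hα, hβ]; linarith
  have hava : α * vinf = a := by
    have : c1 * (α * vinf) = c1 * a := by
      calc c1 * (α * vinf) = α * (c1 * vinf) := by ring
        _ = c1 * a := by rw [hb, hab]; ring
    exact mul_left_cancel₀ hc1.ne' this
  have hc : c0 = α - c1 * vinf := by rw [hb, hα, hβ]; ring
  have key : a0 - a = -((vinf - v0) * γ) := by
    rw [ha0, hγ, hc, ← hava]; ring
  have hD : ∀ t, 1 - γ * E t w = 1 + γ / w * (Real.exp (w * t) - 1) := by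
    intro t; rw [hE]; field_simp; ring
  have hgw : 0 < γ / w := by positivity
  have hpos : ∀ t : ℝ, 0 ≤ t → 0 < 1 - γ * E t w := by
    intro t ht
    rw [hD]
    have : 1 ≤ Real.exp (w * t) := Real.one_le_exp (by positivity)
    have : 0 ≤ γ / w * (Real.exp (w * t) - 1) := mul_nonneg hgw.le (by linarith)
    linarith
  have hv2 : ∀ t : ℝ, 0 ≤ t → v t = vinf - (vinf - v0) / (1 - γ * E t w) := by
    intro t ht
    have h := (hpos t ht).ne'
    rw [hv, key, eq_sub_iff_add_eq, add_assoc, ← add_div,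
      show -((vinf - v0) * γ) * E t w + (vinf - v0) = (vinf - v0) * (1 - γ * E t w) by ring,
      mul_div_assoc, div_self h]
    ring
  refine ⟨hpos, ?_, ?_⟩
  · intro s hs t ht hst
    rw [hv2 s hs, hv2 t ht]
    have h1 : Real.exp (w * s) < Real.exp (w * t) :=
      Real.exp_lt_exp.mpr (mul_lt_mul_of_pos_left hst hwpos)
    have h2 : 1 - γ * E s w < 1 - γ * E t w := by
      rw [hD, hD]
      have := mul_lt_mul_of_pos_left h1 hgw
      linarith
    have := div_lt_div_of_pos_left (sub_pos.mpr hlt) (hpos s hs) h2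
    linarith
  · have hT : Filter.Tendsto (fun t => 1 - γ * E t w) Filter.atTop Filter.atTop := by
      simp only [hD]
      refine Filter.tendsto_atTop_add_const_left _ _ (Filter.Tendsto.const_mul_atTop hgw ?_)
      simp only [sub_eq_add_neg]
      refine Filter.tendsto_atTop_add_const_right _ _ ?_
      exact Real.tendsto_exp_atTop.comp (Filter.Tendsto.const_mul_atTop hwpos Filter.tendsto_id)
    have h := (hT.const_div_atTop (vinf - v0)).const_sub vinf
    rw [sub_zero] at h
    refine h.congr' ?_
    filter_upwards [Filter.eventually_ge_atTop 0] with t ht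
    exact (hv2 t ht).symm
end
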